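/- Let p = 3, m a positive integer, and q = p^m. Then Σ_{(α,β,γ) ∈ F_q³} S(α,β,γ)⁴ = (8(p^m − 1)² + 1)·p^{3m}. -/

import Mathlib

open Complex Finset

noncomputable def zetaPow (p : ℕ) (a : ZMod p) : ℂ :=
  Complex.exp (2 * Real.pi * Complex.I * (a.val : ℂ) / (p : ℂ))

noncomputable def expSum (p m : ℕ) [Fact p.Prime]
    (α β γ : GaloisField p m) : ℂ :=
  letI : Fintype (GaloisField p m) := Fintype.ofFinite _
  ∑ x : GaloisField p m,
    zetaPow p ((Algebra.trace (ZMod p) (GaloisField p m))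
      (α * x ^ 2 + β * x ^ (p + 1) + γ * x ^ (p ^ 2 + 1)))

noncomputable def nval (p m : ℕ) (ε : ℤ) (j : ℕ) : ℂ :=
  if j % 2 = 0 then (ε : ℂ) * ((Real.sqrt ((p : ℝ) ^ (m + j)) : ℝ) : ℂ)
  else (ε : ℂ) * Complex.I * ((Real.sqrt ((p : ℝ) ^ (m + j)) : ℝ) : ℂ)

noncomputable def nn (p m : ℕ) [Fact p.Prime] (ε : ℤ) (j : ℕ) : ℕ :=
  {t : GaloisField p m × GaloisField p m × GaloisField p m |
    t ≠ (0, 0, 0) ∧ expSum p m t.1 t.2.1 t.2.2 = nval p m ε j}.ncard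

theorem zetaPow_eq_stdAddChar (p : ℕ) [NeZero p] (a : ZMod p) :
    zetaPow p a = ZMod.stdAddChar a := by
  rw [ZMod.stdAddChar_apply, ZMod.toCircle_apply, zetaPow]

/-- The character `x ↦ ζ_p ^ Tr x` of an extension `F` of `ZMod p`. -/
noncomputable def traceChar (p : ℕ) [NeZero p] (F : Type*) [Field F] [Algebra (ZMod p) F] :
    AddChar F ℂ :=
  ZMod.stdAddChar.compAddMonoidHom (Algebra.trace (ZMod p) F).toAddMonoidHom

theorem traceChar_isPrimitive (p : ℕ) [Fact p.Prime] (F : Type*) [Field F] [Finite F]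
    [Algebra (ZMod p) F] : (traceChar p F).IsPrimitive := by
  refine AddChar.IsPrimitive.of_ne_one fun h => ?_
  obtain ⟨x, hx⟩ := Algebra.trace_surjective (ZMod p) F 1
  have h1 : ZMod.stdAddChar (N := p) (Algebra.trace (ZMod p) F x) = 1 := DFunLike.congr_fun h x
  rw [hx, ← AddChar.map_zero_eq_one (ZMod.stdAddChar (N := p))] at h1
  exact one_ne_zero (ZMod.injective_stdAddChar h1)

theorem expSum_eq_sum_traceChar (p m : ℕ) [Fact p.Prime] [inst : Fintype (GaloisField p m)]
    (α β γ : GaloisField p m) :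
    expSum p m α β γ = ∑ x, traceChar p (GaloisField p m)
      (α * x ^ 2 + β * x ^ (p + 1) + γ * x ^ (p ^ 2 + 1)) := by
  obtain rfl := Subsingleton.elim inst (Fintype.ofFinite _)
  simp only [expSum, zetaPow_eq_stdAddChar]
  rfl

section Orthogonality

variable {F : Type*} [Field F] [Fintype F] [DecidableEq F]

theorem sum_addChar_linear_form {ψ : AddChar F ℂ} (hψ : ψ.IsPrimitive) (A B C : F) :
    ∑ t : F × F × F, ψ (t.1 * A + t.2.1 * B + t.2.2 * C) =
      if A = 0 ∧ B = 0 ∧ C = 0 then (Fintype.card F : ℂ) ^ 3 else 0 := by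
  simp_rw [Fintype.sum_prod_type, AddChar.map_add_eq_mul, ← Finset.mul_sum,
    ← Finset.sum_mul, AddChar.sum_mulShift _ hψ, ← Finset.mul_sum, ← Finset.sum_mul,
    AddChar.sum_mulShift _ hψ]
  split_ifs <;> simp_all
  ring

theorem sum_fourth_moment_eq_card {ψ : AddChar F ℂ} (hψ : ψ.IsPrimitive) (i j k : ℕ) :
    ∑ t : F × F × F, (∑ x, ψ (t.1 * x ^ i + t.2.1 * x ^ j + t.2.2 * x ^ k)) ^ 4 =
      (Fintype.card F : ℂ) ^ 3 * #{v : Fin 4 → F |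
        ∑ n, v n ^ i = 0 ∧ ∑ n, v n ^ j = 0 ∧ ∑ n, v n ^ k = 0} := by
  have expand (t : F × F × F) :
      (∑ x, ψ (t.1 * x ^ i + t.2.1 * x ^ j + t.2.2 * x ^ k)) ^ 4 =
        ∑ v : Fin 4 → F, ψ (t.1 * ∑ n, v n ^ i + t.2.1 * ∑ n, v n ^ j
          + t.2.2 * ∑ n, v n ^ k) := by
    rw [Fintype.sum_pow]
    refine Finset.sum_congr rfl fun v _ => ?_
    simp only [Fin.prod_univ_four, Fin.sum_univ_four, ← AddChar.map_add_eq_mul]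
    congr 1
    ring
  simp_rw [expand]
  rw [Finset.sum_comm]
  simp_rw [sum_addChar_linear_form hψ]
  rw [← Finset.sum_filter, Finset.sum_const, nsmul_eq_mul, mul_comm]

end Orthogonality

section CharThree

variable {F : Type*} [Field F] [CharP F 3]

theorem three_eq_zero_of_charP : (3 : F) = 0 := mod_cast CharP.cast_eq_zero F 3

theorem sum_pow_five_eq_zero {a b c d : F} (h1 : a + b + c + d = 0)
    (h2 : a ^ 2 + b ^ 2 + c ^ 2 + d ^ 2 = 0) : a ^ 5 + b ^ 5 + c ^ 5 + d ^ 5 = 0 := by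
  linear_combination
    (a ^ 4 + b ^ 4 + c ^ 4 + d ^ 4 + (a + b + c + d) * (a ^ 3 + b ^ 3 + c ^ 3 + d ^ 3)
      - a * b * c * d) * h1
    + (a * b * c + a * b * d + a * c * d + b * c * d - (a ^ 3 + b ^ 3 + c ^ 3 + d ^ 3)) * h2
    - (a * b + a * c + a * d + b * c + b * d + c * d) * (a ^ 3 + b ^ 3 + c ^ 3 + d ^ 3)
      * three_eq_zero_of_charP (F := F)

/-- In characteristic three, coordinates in which the sum of four squares is the determinant
`a * d - b * c`. -/
def sumSqDetEquiv : (Fin 4 → F) ≃ F × F × F × F where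
  toFun v := (v 2 - (v 0 + v 1), v 0 - v 1 - v 3, v 0 - v 1 + v 3, v 2 + (v 0 + v 1))
  invFun t := ![t.2.2.2 - t.1 + (t.2.1 + t.2.2.1), t.2.2.2 - t.1 - (t.2.1 + t.2.2.1),
    -(t.1 + t.2.2.2), t.2.1 - t.2.2.1]
  left_inv v := by
    have h3 := three_eq_zero_of_charP (F := F)
    ext i
    fin_cases i
    · change v 2 + (v 0 + v 1) - (v 2 - (v 0 + v 1)) + (v 0 - v 1 - v 3 + (v 0 - v 1 + v 3)) = v 0
      linear_combination v 0 * h3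
    · change v 2 + (v 0 + v 1) - (v 2 - (v 0 + v 1)) - (v 0 - v 1 - v 3 + (v 0 - v 1 + v 3)) = v 1
      linear_combination v 1 * h3
    · change -(v 2 - (v 0 + v 1) + (v 2 + (v 0 + v 1))) = v 2
      linear_combination -v 2 * h3
    · change v 0 - v 1 - v 3 - (v 0 - v 1 + v 3) = v 3
      linear_combination -v 3 * h3
  right_inv := by
    rintro ⟨a, b, c, d⟩
    have h3 := three_eq_zero_of_charP (F := F)
    refine Prod.ext ?_ (Prod.ext ?_ (Prod.ext ?_ ?_))
    · change -(a + d) - (d - a + (b + c) + (d - a - (b + c))) = a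
      linear_combination -d * h3
    · change d - a + (b + c) - (d - a - (b + c)) - (b - c) = b
      linear_combination c * h3
    · change d - a + (b + c) - (d - a - (b + c)) + (b - c) = c
      linear_combination b * h3
    · change -(a + d) + (d - a + (b + c) + (d - a - (b + c))) = d
      linear_combination -a * h3

theorem sum_pow_eq_zero_iff (v : Fin 4 → F) :
    (∑ n, v n ^ 2 = 0 ∧ ∑ n, v n ^ 4 = 0 ∧ ∑ n, v n ^ 10 = 0) ↔
      (sumSqDetEquiv v).1 * (sumSqDetEquiv v).2.2.2 =
        (sumSqDetEquiv v).2.1 * (sumSqDetEquiv v).2.2.1 ∧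
      (sumSqDetEquiv v).1 * (sumSqDetEquiv v).2.2.2 ^ 3
          + (sumSqDetEquiv v).1 ^ 3 * (sumSqDetEquiv v).2.2.2 =
        (sumSqDetEquiv v).2.1 * (sumSqDetEquiv v).2.2.1 ^ 3
          + (sumSqDetEquiv v).2.1 ^ 3 * (sumSqDetEquiv v).2.2.1 := by
  have h3 := three_eq_zero_of_charP (F := F)
  simp only [sumSqDetEquiv, Equiv.coe_fn_mk, Fin.sum_univ_four]
  constructor
  · rintro ⟨h2, h4, -⟩
    constructor
    · linear_combination h2 - (v 0 ^ 2 + v 1 ^ 2) * h3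
    · linear_combination 2 * h4 - (2 * v 0 ^ 4 + 2 * v 1 ^ 4 + 8 * v 0 ^ 2 * v 1 ^ 2) * h3
  · rintro ⟨hd, hq⟩
    have h2 : v 0 ^ 2 + v 1 ^ 2 + v 2 ^ 2 + v 3 ^ 2 = 0 := by
      linear_combination hd + (v 0 ^ 2 + v 1 ^ 2) * h3
    have h4 : v 0 ^ 4 + v 1 ^ 4 + v 2 ^ 4 + v 3 ^ 4 = 0 := by
      linear_combination -hq + (v 0 ^ 4 + v 1 ^ 4 + v 2 ^ 4 + v 3 ^ 4
        - (2 * v 0 ^ 4 + 2 * v 1 ^ 4 + 8 * v 0 ^ 2 * v 1 ^ 2)) * h3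
    refine ⟨h2, h4, ?_⟩
    have h5 := sum_pow_five_eq_zero h2 (by linear_combination h4)
    linear_combination h5

end CharThree

section Count

theorem card_fst_or_snd_mem {F : Type*} [Fintype F] [DecidableEq F] (T : Finset F) :
    (#{x : F × F | x.1 ∈ T ∨ x.2 ∈ T} : ℤ) =
      (Fintype.card F : ℤ) ^ 2 - ((Fintype.card F : ℤ) - #T) ^ 2 := by
  have h : ({x : F × F | x.1 ∈ T ∨ x.2 ∈ T} : Finset (F × F)) = (Tᶜ ×ˢ Tᶜ)ᶜ := by
    ext x
    simp only [mem_filter, mem_univ, true_and, mem_compl, mem_product]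
    tauto
  rw [h, card_compl, Nat.cast_sub (card_le_univ _), card_product, card_compl, Nat.cast_mul,
    Nat.cast_sub (card_le_univ _), Fintype.card_prod]
  push_cast
  ring

variable {F : Type*} [Field F] [DecidableEq F]

theorem det_and_frobenius_iff {a b c d : F} :
    (a * d = b * c ∧ a * d ^ 3 + a ^ 3 * d = b * c ^ 3 + b ^ 3 * c) ↔
      a * d = b * c ∧ (b ∈ ({0, a, -a} : Finset F) ∨ c ∈ ({0, a, -a} : Finset F)) := by
  refine and_congr_right fun hd => ?_
  by_cases ha : a = 0
  · subst ha
    have hbc : b = 0 ∨ c = 0 := by simpa using hd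
    rcases hbc with rfl | rfl <;> simp
  · have key : a ^ 2 * (a * d ^ 3 + a ^ 3 * d - (b * c ^ 3 + b ^ 3 * c)) =
        b * (b - a) * (b + a) * (c * (c - a) * (c + a)) := by
      linear_combination (a ^ 2 * d ^ 2 + a * d * b * c + b ^ 2 * c ^ 2 + a ^ 4) * hd
    rw [← sub_eq_zero, ← mul_right_inj' (pow_ne_zero 2 ha), key]
    simp [sub_eq_zero, eq_neg_iff_add_eq_zero, or_assoc]

variable [Fintype F]

theorem card_det_and_mem_of_ne_zero {a : F} (ha : a ≠ 0) (T : Finset F) :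
    #{x : F × F × F | a * x.2.2 = x.1 * x.2.1 ∧ (x.1 ∈ T ∨ x.2.1 ∈ T)} =
      #{x : F × F | x.1 ∈ T ∨ x.2 ∈ T} := by
  refine Finset.card_nbij' (fun x => (x.1, x.2.1)) (fun x => (x.1, x.2, a⁻¹ * (x.1 * x.2)))
    ?_ ?_ ?_ ?_
  · rintro ⟨b, c, d⟩ h
    simp_all
  · rintro ⟨b, c⟩ h
    simp_all
  · rintro ⟨b, c, d⟩ h
    have h' : a * d = b * c := by simp_all
    simp [← h', ha]
  · rintro ⟨b, c⟩ h
    rfl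

theorem card_det_and_mem_zero :
    #{x : F × F × F | (0 : F) * x.2.2 = x.1 * x.2.1 ∧
        (x.1 ∈ ({0} : Finset F) ∨ x.2.1 ∈ ({0} : Finset F))} =
      #{x : F × F | x.1 ∈ ({0} : Finset F) ∨ x.2 ∈ ({0} : Finset F)} * Fintype.card F := by
  rw [← card_univ (α := F), ← card_product]
  refine Finset.card_nbij' (fun x => ((x.1, x.2.1), x.2.2)) (fun x => (x.1.1, x.1.2, x.2))
    ?_ ?_ ?_ ?_
  · rintro ⟨b, c, d⟩ h
    simp_all
  · rintro ⟨⟨b, c⟩, d⟩ h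
    simp_all
  · rintro ⟨b, c, d⟩ h
    rfl
  · rintro ⟨⟨b, c⟩, d⟩ h
    rfl

theorem card_det_and_frobenius [CharP F 3] :
    (#{x : F × F × F × F | x.1 * x.2.2.2 = x.2.1 * x.2.2.1 ∧
        x.1 * x.2.2.2 ^ 3 + x.1 ^ 3 * x.2.2.2 =
          x.2.1 * x.2.2.1 ^ 3 + x.2.1 ^ 3 * x.2.2.1} : ℤ) =
      8 * ((Fintype.card F : ℤ) - 1) ^ 2 + 1 := by
  simp_rw [det_and_frobenius_iff]
  have fiber (a : F) : (#{x : F × F × F | a * x.2.2 = x.1 * x.2.1 ∧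
      (x.1 ∈ ({0, a, -a} : Finset F) ∨ x.2.1 ∈ ({0, a, -a} : Finset F))} : ℤ) =
      if a = 0 then (2 * (Fintype.card F : ℤ) - 1) * Fintype.card F
        else 6 * (Fintype.card F : ℤ) - 9 := by
    split_ifs with ha
    · subst ha
      simp only [neg_zero, insert_eq_of_mem (mem_singleton_self (0 : F))]
      rw [card_det_and_mem_zero, Nat.cast_mul, card_fst_or_snd_mem, card_singleton]
      push_cast
      ring
    · have hT : #({0, a, -a} : Finset F) = 3 := by
        refine card_eq_three.2
          ⟨0, a, -a, Ne.symm ha, by simpa [eq_comm] using ha, fun h => ha ?_, rfl⟩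
        linear_combination a * three_eq_zero_of_charP (F := F) - h
      rw [card_det_and_mem_of_ne_zero ha, card_fst_or_snd_mem, hT]
      push_cast
      ring
  have split : (#{x : F × F × F × F | x.1 * x.2.2.2 = x.2.1 * x.2.2.1 ∧
      (x.2.1 ∈ ({0, x.1, -x.1} : Finset F) ∨ x.2.2.1 ∈ ({0, x.1, -x.1} : Finset F))} : ℤ) =
      ∑ a : F, (#{x : F × F × F | a * x.2.2 = x.1 * x.2.1 ∧
        (x.1 ∈ ({0, a, -a} : Finset F) ∨ x.2.1 ∈ ({0, a, -a} : Finset F))} : ℤ) := by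
    simp only [Finset.card_filter, Nat.cast_sum]
    rw [Fintype.sum_prod_type]
  rw [split]
  simp_rw [fiber]
  rw [Finset.sum_ite, Finset.filter_eq' univ (0 : F), Finset.filter_ne' univ (0 : F)]
  simp only [mem_univ, if_true, sum_const, card_singleton, card_erase_of_mem, card_univ,
    nsmul_eq_mul, Nat.cast_sub (Fintype.card_pos (α := F))]
  push_cast
  ring

theorem card_sum_pow_eq_zero [CharP F 3] :
    (#{v : Fin 4 → F | ∑ n, v n ^ 2 = 0 ∧ ∑ n, v n ^ 4 = 0 ∧ ∑ n, v n ^ 10 = 0} : ℤ) =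
      8 * ((Fintype.card F : ℤ) - 1) ^ 2 + 1 := by
  rw [← card_det_and_frobenius]
  congr 1
  refine Finset.card_equiv sumSqDetEquiv fun v => ?_
  simp only [mem_filter, mem_univ, true_and, sum_pow_eq_zero_iff]

end Count

theorem sum_S_fourth_moment (m : ℕ) (hm : 0 < m) :
    letI : Fact (Nat.Prime 3) := ⟨by norm_num⟩
    letI : Fintype (GaloisField 3 m) := Fintype.ofFinite _
    ∑ t : GaloisField 3 m × GaloisField 3 m × GaloisField 3 m,
      (expSum 3 m t.1 t.2.1 t.2.2) ^ 4 =
        (8 * ((3 : ℂ) ^ m - 1) ^ 2 + 1) * (3 : ℂ) ^ (3 * m) := by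
  classical
  have : Fact (Nat.Prime 3) := ⟨by norm_num⟩
  let : Fintype (GaloisField 3 m) := Fintype.ofFinite _
  have hcard : Fintype.card (GaloisField 3 m) = 3 ^ m := by
    rw [← Nat.card_eq_fintype_card, GaloisField.card 3 m hm.ne']
  have hcount : ((_ : ℤ) : ℂ) = _ :=
    congrArg (Int.cast (R := ℂ)) (card_sum_pow_eq_zero (F := GaloisField 3 m))
  simp_rw [expSum_eq_sum_traceChar]
  rw [sum_fourth_moment_eq_card (traceChar_isPrimitive 3 (GaloisField 3 m))]
  rw [hcard] at hcount ⊢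
  push_cast at hcount ⊢
  rw [hcount]
  ring
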